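/- For N ≥ 2, parameters κ, γ, δ > 1 and any compatibility list C of positive reals, the social objective O(α) = Σ_{i=1}^N U_i(α) is strictly concave on the feasible set F = {α ∈ [0,1)^{n_N} : for every i there exists j ≠ i with α_{ij} > 0}. -/

import Mathlib

/-- ALKY utility of individual `i` given the compatibility matrix `c` and the
(symmetric) weight matrix `α`: sum over the other individuals j ≠ i. -/
noncomputable def Uind (N : ℕ) (κ γ δ : ℝ) (c : Fin N → Fin N → ℝ) (i : Fin N)
    (α : Fin N → Fin N → ℝ) : ℝ :=
  (∑ j ∈ Finset.univ.erase i, (κ * α i j * c i j - α i j ^ γ / (1 - α i j ^ γ)))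
    - (∑ j ∈ Finset.univ.erase i, α i j) ^ δ

/-- The social objective: the sum of the individual utilities. -/
noncomputable def socialObj (N : ℕ) (κ γ δ : ℝ) (c : Fin N → Fin N → ℝ)
    (α : Fin N → Fin N → ℝ) : ℝ :=
  ∑ i, Uind N κ γ δ c i α

/-- The feasible set of the Social Optimization Problem: symmetric weight
lists with zero diagonal, off-diagonal weights in [0,1), and no isolated
vertex (every individual has at least one strictly positive edge weight). -/
def WeightFeasible (N : ℕ) (α : Fin N → Fin N → ℝ) : Prop :=
  (∀ i j, α i j = α j i) ∧ (∀ i, α i i = 0) ∧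
  (∀ i j, i ≠ j → α i j ∈ Set.Ico (0:ℝ) 1) ∧
  (∀ i, ∃ j, j ≠ i ∧ 0 < α i j)

/-!
Row `i` of `α` enters the social objective only through `U_i`, and a sum of strictly concave
functions of independent variables is jointly strictly concave. So it suffices to treat one row,
where the same principle applies once more: the benefit of a single weight `t` is linear minus
`t ^ γ / (1 - t ^ γ) = (1 - t ^ γ)⁻¹ - 1`, which is strictly convex because inversion is strictly
convex and decreasing and `1 - t ^ γ` is concave, and the power of the row sum is merely convex.
The diagonal is harmless: a vanishing weight contributes nothing to the utility.
-/

open Set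

section StrictConcaveSum

variable {𝕜 ι β : Type*} {E : ι → Type*} [Fintype ι] [Semiring 𝕜] [PartialOrder 𝕜]
  [∀ i, AddCommMonoid (E i)] [∀ i, Module 𝕜 (E i)]
  [AddCommMonoid β] [PartialOrder β] [IsOrderedCancelAddMonoid β] [Module 𝕜 β]

theorem strictConcaveOn_sum_pi {s : ∀ i, Set (E i)} {f : ∀ i, E i → β}
    (hf : ∀ i, StrictConcaveOn 𝕜 (s i) (f i)) :
    StrictConcaveOn 𝕜 (univ.pi s) fun x ↦ ∑ i, f i (x i) := by
  refine ⟨convex_pi fun i _ ↦ (hf i).1, fun x hx y hy hxy a b ha hb hab ↦ ?_⟩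
  obtain ⟨k, hk⟩ := Function.ne_iff.mp hxy
  calc a • ∑ i, f i (x i) + b • ∑ i, f i (y i)
      = ∑ i, (a • f i (x i) + b • f i (y i)) := by
        rw [Finset.smul_sum, Finset.smul_sum, Finset.sum_add_distrib]
    _ < ∑ i, f i (a • x i + b • y i) :=
        Finset.sum_lt_sum
          (fun i _ ↦ (hf i).concaveOn.2 (hx i trivial) (hy i trivial) ha.le hb.le hab)
          ⟨k, Finset.mem_univ k, (hf k).2 (hx k trivial) (hy k trivial) hk ha hb hab⟩

end StrictConcaveSum

section PowerCost

variable {p : ℝ}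

theorem strictConvexOn_inv_Ioi : StrictConvexOn ℝ (Ioi 0) fun x : ℝ ↦ x⁻¹ := by
  simpa only [zpow_neg_one] using strictConvexOn_zpow (m := -1) (by decide) (by decide)

theorem strictAntiOn_one_sub_rpow (hp : 0 < p) :
    StrictAntiOn (fun t : ℝ ↦ 1 - t ^ p) (Ici 0) :=
  fun _ hs _ _ hst ↦ sub_lt_sub_left (Real.rpow_lt_rpow hs hst hp) 1

theorem image_one_sub_rpow_Ico (hp : 0 < p) :
    (fun t : ℝ ↦ 1 - t ^ p) '' Ico 0 1 = Ioc 0 1 := by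
  have hcont : Continuous fun t : ℝ ↦ 1 - t ^ p :=
    continuous_const.sub (Real.continuous_rpow_const hp.le)
  simpa [Real.zero_rpow hp.ne'] using hcont.continuousOn.image_Ico_of_strictAntiOn zero_le_one
    ((strictAntiOn_one_sub_rpow hp).mono Icc_subset_Ici_self)

theorem strictConvexOn_inv_one_sub_rpow (hp : 1 ≤ p) :
    StrictConvexOn ℝ (Ico 0 1) fun t : ℝ ↦ (1 - t ^ p)⁻¹ := by
  have hp₀ : 0 < p := zero_lt_one.trans_le hp
  have himage : (fun t : ℝ ↦ 1 - t ^ p) '' Ico 0 1 ⊆ Ioi 0 :=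
    (image_one_sub_rpow_Ico hp₀).trans_subset Ioc_subset_Ioi_self
  have hconcave : ConcaveOn ℝ (Ico 0 1) fun t : ℝ ↦ 1 - t ^ p :=
    (concaveOn_const 1 (convex_Ico 0 1)).sub
      ((convexOn_rpow hp).subset Ico_subset_Ici_self (convex_Ico 0 1))
  exact (strictConvexOn_inv_Ioi.subset himage
      (image_one_sub_rpow_Ico hp₀ ▸ convex_Ioc 0 1)).comp_concaveOn hconcave
    (fun _ hx _ _ hxy ↦ inv_anti₀ (himage hx) hxy)
    ((strictAntiOn_one_sub_rpow hp₀).injOn.mono Ico_subset_Ici_self)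

theorem strictConvexOn_rpow_div_one_sub_rpow (hp : 1 ≤ p) :
    StrictConvexOn ℝ (Ico 0 1) fun t : ℝ ↦ t ^ p / (1 - t ^ p) := by
  refine ((strictConvexOn_inv_one_sub_rpow hp).add_const (-1)).congr fun t ht ↦ ?_
  have hne : 1 - t ^ p ≠ 0 :=
    (sub_pos.mpr (Real.rpow_lt_one ht.1 ht.2 (zero_lt_one.trans_le hp))).ne'
  simp only [Pi.add_apply]
  field_simp
  ring

end PowerCost

section RowUtility

variable {ι : Type*} [Fintype ι] {κ γ δ : ℝ}

/-- The ALKY utility of one individual as a function of their row `r` of weights, with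
compatibilities `c`. The sums run over all of `ι`, with no index left out for the individual
themselves. -/
noncomputable def rowUtility (κ γ δ : ℝ) (c r : ι → ℝ) : ℝ :=
  ∑ j, (κ * r j * c j - r j ^ γ / (1 - r j ^ γ)) - (∑ j, r j) ^ δ

theorem strictConcaveOn_linear_sub_rpow_div_one_sub_rpow (hγ : 1 ≤ γ) (m : ℝ) :
    StrictConcaveOn ℝ (Ico 0 1) fun t : ℝ ↦ κ * t * m - t ^ γ / (1 - t ^ γ) := by
  have hlinear : ConcaveOn ℝ (Ico 0 1) fun t : ℝ ↦ κ * t * m :=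
    ((LinearMap.mul ℝ ℝ (κ * m)).concaveOn (convex_Ico 0 1)).congr fun t _ ↦ by
      simp only [LinearMap.mul_apply']; ring
  exact hlinear.sub_strictConvexOn (strictConvexOn_rpow_div_one_sub_rpow hγ)

theorem convexOn_sum_rpow (hδ : 1 ≤ δ) :
    ConvexOn ℝ (univ.pi fun _ ↦ Ici 0) fun r : ι → ℝ ↦ (∑ j, r j) ^ δ := by
  have hcomp := (convexOn_rpow hδ).comp_linearMap
    (∑ j, LinearMap.proj j : (ι → ℝ) →ₗ[ℝ] ℝ)
  refine (hcomp.subset (fun r hr ↦ ?_) (convex_pi fun _ _ ↦ convex_Ici 0)).congr fun r _ ↦ ?_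
  · simpa using Finset.sum_nonneg fun j _ ↦ hr j trivial
  · simp

theorem strictConcaveOn_rowUtility (hγ : 1 ≤ γ) (hδ : 1 ≤ δ) (c : ι → ℝ) :
    StrictConcaveOn ℝ (univ.pi fun _ ↦ Ico 0 1) (rowUtility κ γ δ c) :=
  (strictConcaveOn_sum_pi fun j ↦
      strictConcaveOn_linear_sub_rpow_div_one_sub_rpow hγ (c j)).sub_convexOn
    ((convexOn_sum_rpow hδ).subset (pi_mono fun _ _ ↦ Ico_subset_Ici_self)
      (convex_pi fun _ _ ↦ convex_Ico 0 1))

end RowUtility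

theorem Uind_eq_rowUtility {N : ℕ} {κ γ δ : ℝ} {c α : Fin N → Fin N → ℝ} {i : Fin N}
    (hγ : γ ≠ 0) (hα : α i i = 0) : Uind N κ γ δ c i α = rowUtility κ γ δ (c i) (α i) := by
  rw [Uind, rowUtility, Finset.sum_erase _ (by simp [hα, Real.zero_rpow hγ]),
    Finset.sum_erase _ hα]

/-- Weight matrices with zero diagonal and entries in `[0,1)`. They are weightings of the ordered
pairs of individuals: `α i j` and `α j i` may differ, and a row may vanish. -/
def directedWeights (N : ℕ) : Set (Fin N → Fin N → ℝ) :=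
  {α | (∀ i, α i i = 0) ∧ ∀ i j, α i j ∈ Ico 0 1}

theorem convex_directedWeights (N : ℕ) : Convex ℝ (directedWeights N) :=
  fun _ hα _ hβ _ _ ha hb hab ↦ ⟨fun i ↦ by simp [hα.1 i, hβ.1 i],
    fun i j ↦ convex_Ico 0 1 (hα.2 i j) (hβ.2 i j) ha hb hab⟩

theorem WeightFeasible.mem_directedWeights {N : ℕ} {α : Fin N → Fin N → ℝ}
    (hα : WeightFeasible N α) : α ∈ directedWeights N := by
  obtain ⟨-, hdiag, hmem, -⟩ := hα
  refine ⟨hdiag, fun i j ↦ ?_⟩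
  rcases eq_or_ne i j with rfl | hij
  · simp [hdiag]
  · exact hmem i j hij

theorem convex_setOf_weightFeasible (N : ℕ) :
    Convex ℝ {α : Fin N → Fin N → ℝ | WeightFeasible N α} := by
  refine convex_iff_forall_pos.mpr fun α hα β hβ a b ha hb hab ↦ ?_
  have hdir := convex_directedWeights N hα.mem_directedWeights hβ.mem_directedWeights
    ha.le hb.le hab
  refine ⟨fun i j ↦ by simp [hα.1 i j, hβ.1 i j], hdir.1, fun i j _ ↦ hdir.2 i j, fun i ↦ ?_⟩
  obtain ⟨j, hji, hpos⟩ := hα.2.2.2 i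
  exact ⟨j, hji, add_pos_of_pos_of_nonneg (mul_pos ha hpos)
    (mul_nonneg hb.le (hβ.mem_directedWeights.2 i j).1)⟩

theorem stmt_6_general (N : ℕ) (κ : ℝ) {γ δ : ℝ} (hγ : 1 ≤ γ) (hδ : 1 ≤ δ)
    (c : Fin N → Fin N → ℝ) :
    StrictConcaveOn ℝ (directedWeights N) (socialObj N κ γ δ c) := by
  have hrows := strictConcaveOn_sum_pi fun i ↦ strictConcaveOn_rowUtility (κ := κ) hγ hδ (c i)
  refine (hrows.subset (fun α hα i _ j _ ↦ hα.2 i j) (convex_directedWeights N)).congr ?_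
  exact fun α hα ↦ Finset.sum_congr rfl fun i _ ↦
    (Uind_eq_rowUtility (zero_lt_one.trans_le hγ).ne' (hα.1 i)).symm

/-- For N ≥ 2, parameters κ, γ, δ > 1 and a positive symmetric compatibility
list, the social objective is strictly concave on the feasible set. -/
theorem stmt_6 (N : ℕ) (hN : 2 ≤ N) (κ γ δ : ℝ) (hκ : 1 < κ) (hγ : 1 < γ) (hδ : 1 < δ)
    (c : Fin N → Fin N → ℝ) (hcs : ∀ i j, c i j = c j i)
    (hcpos : ∀ i j, i ≠ j → 0 < c i j) :
    StrictConcaveOn ℝ {α : Fin N → Fin N → ℝ | WeightFeasible N α}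
      (socialObj N κ γ δ c) :=
  (stmt_6_general N κ hγ.le hδ.le c).subset (fun _ hα ↦ hα.mem_directedWeights)
    (convex_setOf_weightFeasible N)
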